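/- Let n ≥ 3 be an integer, let d = ⌊n/√2⌋, and let α, β be real numbers. Then max{ 2|α(n−1) + β(n−1)(n−2)/2| , 2|α(d−1) + β(d−1)(d−2)/2| } ≥ (2/3)(√2 − 1)·|α|·(n − 2√2). -/

import Mathlib

noncomputable section

/-- **Claim 3.3 (Step 3 of the proof of Theorem A).** For `n ≥ 3`, `d = ⌊n/√2⌋` and any
scalars `α, β`,
`max{2|α(n−1) + β(n−1)(n−2)/2|, 2|α(d−1) + β(d−1)(d−2)/2|} ≥ (2/3)(√2−1)|α|(n−2√2)`. -/
theorem statement17 (n : ℕ) (hn : 3 ≤ n) (d : ℕ)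
    (hd : d = ⌊(n : ℝ) / Real.sqrt 2⌋₊) (α β : ℝ) :
    (2 / 3) * (Real.sqrt 2 - 1) * |α| * ((n : ℝ) - 2 * Real.sqrt 2) ≤
      max (2 * |α * ((n : ℝ) - 1) + β * (((n : ℝ) - 1) * ((n : ℝ) - 2) / 2)|)
          (2 * |α * ((d : ℝ) - 1) + β * (((d : ℝ) - 1) * ((d : ℝ) - 2) / 2)|) := by
  have hs2 : Real.sqrt 2 * Real.sqrt 2 = 2 := Real.mul_self_sqrt (by norm_num)
  have hs0 : 0 < Real.sqrt 2 := by positivity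
  have hs1 : 1 < Real.sqrt 2 := by nlinarith
  have hs3 : Real.sqrt 2 < 3 / 2 := by nlinarith
  have hN : (3 : ℝ) ≤ n := by exact_mod_cast hn
  have h1 : (d : ℝ) ≤ n / Real.sqrt 2 := by
    rw [hd]; exact Nat.floor_le (by positivity)
  have h2 : (n : ℝ) / Real.sqrt 2 < d + 1 := by
    rw [hd]; exact Nat.lt_floor_add_one _
  have hd2 : 2 ≤ d := by
    rw [hd]
    apply Nat.le_floor
    rw [le_div_iff₀ hs0]
    push_cast
    linarith
  have hD : (2 : ℝ) ≤ d := by exact_mod_cast hd2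
  rw [le_div_iff₀ hs0] at h1
  rw [div_lt_iff₀ hs0] at h2
  clear hd hn hd2
  generalize Real.sqrt 2 = s at *
  generalize (n : ℝ) = x at *
  generalize (d : ℝ) = y at *
  set A := α * (x - 1) + β * ((x - 1) * (x - 2) / 2) with hA
  set B := α * (y - 1) + β * ((y - 1) * (y - 2) / 2) with hB
  rw [← mul_max_of_nonneg _ _ (by norm_num : (0 : ℝ) ≤ 2)]
  set M := max |A| |B| with hM
  have hAM : |A| ≤ M := le_max_left _ _
  have hBM : |B| ≤ M := le_max_right _ _
  have p : 0 ≤ (y - 1) * (y - 2) := mul_nonneg (by linarith) (by linarith)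
  have q : 0 < (x - 1) * (x - 2) := mul_pos (by linarith) (by linarith)
  have hyx : y ≤ x := by nlinarith
  have hα : 0 ≤ |α| := abs_nonneg α
  have key : |α| * ((x - 1) * (y - 1) * (x - y)) ≤ M * ((y - 1) * (y - 2) + (x - 1) * (x - 2)) := by
    have r : 0 ≤ (x - 1) * (y - 1) * (x - y) :=
      mul_nonneg (mul_nonneg (by linarith) (by linarith)) (by linarith)
    have e : α * ((x - 1) * (y - 1) * (x - y))
        = (x - 1) * (x - 2) * B - (y - 1) * (y - 2) * A := by
      rw [hA, hB]; ring
    calc |α| * ((x - 1) * (y - 1) * (x - y))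
        = |(x - 1) * (x - 2) * B - (y - 1) * (y - 2) * A| := by
          rw [← e, abs_mul, abs_of_nonneg r]
      _ ≤ |(x - 1) * (x - 2) * B| + |(y - 1) * (y - 2) * A| := abs_sub _ _
      _ = (x - 1) * (x - 2) * |B| + (y - 1) * (y - 2) * |A| := by
          rw [abs_mul _ B, abs_mul _ A, abs_of_nonneg p, abs_of_nonneg q.le]
      _ ≤ (x - 1) * (x - 2) * M + (y - 1) * (y - 2) * M := by gcongr
      _ = _ := by ring
  have hx : 0 ≤ x - 2 * s := by linarith
  have a1 : (x - 2 * s) * s ≤ 2 * (y - 1) := by nlinarith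
  have a2 : x * (s - 1) * s ≤ 2 * (x - y) := by nlinarith
  have a3 : (x - 2 * s) * s * (x * (s - 1) * s) ≤ 2 * (y - 1) * (2 * (x - y)) :=
    mul_le_mul a1 a2 (mul_nonneg (mul_nonneg (by linarith) (by linarith)) hs0.le) (by linarith)
  have a4 : (x - 2 * s) * x * (s - 1) ≤ 2 * (y - 1) * (x - y) := by
    have : (x - 2 * s) * s * (x * (s - 1) * s) = 2 * ((x - 2 * s) * x * (s - 1)) := by
      rw [← hs2]; ring
    linarith
  have y2 : 2 * (y * y) ≤ x * x := by
    have : (y * s) * (y * s) ≤ x * x := mul_self_le_mul_self (by nlinarith) h1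
    nlinarith
  have a5 : (y - 1) * (y - 2) + (x - 1) * (x - 2) ≤ 3 / 2 * (x * (x - 1)) := by nlinarith
  have c0 : 0 ≤ (s - 1) * (x - 2 * s) := mul_nonneg (by linarith) hx
  have a6 : (s - 1) * (x - 2 * s) * ((y - 1) * (y - 2) + (x - 1) * (x - 2))
      ≤ 3 * ((x - 1) * (y - 1) * (x - y)) := by
    have b1 := mul_le_mul_of_nonneg_left a5 c0
    have b2 := mul_le_mul_of_nonneg_right a4 (by linarith : 0 ≤ x - 1)
    linarith
  have a7 := mul_le_mul_of_nonneg_left a6 hα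
  have fin : (|α| * ((s - 1) * (x - 2 * s))) * ((y - 1) * (y - 2) + (x - 1) * (x - 2))
      ≤ (3 * M) * ((y - 1) * (y - 2) + (x - 1) * (x - 2)) := by linarith
  have := le_of_mul_le_mul_right fin (by linarith)
  linarith
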